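/- Let C be a strong divisibility sequence, let p be an acceptable prime for C with parameter s = s(p), and let k ≥ 2. Let n = α(p^s)·n' + r with 0 ≤ r < α(p^s), and let (m_1, …, m_k) be nonnegative integers with m_1 + ⋯ + m_k = n; write m_i = α(p^s)·m_i' + r_i with 0 ≤ r_i < α(p^s), set r⃗ = (r_1,…,r_k), and set λ = n' − (m_1' + ⋯ + m_k'). Then ν_p(binom(n; m_1,…,m_k)_C) = f_{p,k,C,λ}(r, r⃗) + ν_p(n'!) − Σ_{i=1}^k ν_p(m_i'!). -/

import Mathlib

open Finset

/-- A strong divisibility sequence: nonzero integers `Cs 1, Cs 2, ...` with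
`gcd (Cs n) (Cs m) = |Cs (gcd n m)|`. -/
def IsStrongDivSeq (Cs : ℕ → ℤ) : Prop :=
  (∀ n, 1 ≤ n → Cs n ≠ 0) ∧
  ∀ m n, 1 ≤ m → 1 ≤ n → Int.gcd (Cs n) (Cs m) = (Cs (Nat.gcd n m)).natAbs

/-- `a` is the rank of apparition of `m` in the sequence `Cs`:
the least index `j ≥ 1` such that `m ∣ Cs j`. -/
def IsRank (Cs : ℕ → ℤ) (m a : ℕ) : Prop :=
  1 ≤ a ∧ (m : ℤ) ∣ Cs a ∧ ∀ j, 1 ≤ j → (m : ℤ) ∣ Cs j → a ≤ j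

/-- The `C`-orial: `0!_C = 1`, `n!_C = Cs 1 * Cs 2 * ⋯ * Cs n`. -/
def Corial (Cs : ℕ → ℤ) : ℕ → ℤ
  | 0 => 1
  | n + 1 => Corial Cs n * Cs (n + 1)

/-- `p` is an acceptable prime for `Cs`, with `α k` the rank of apparition of `p ^ k`
and parameter `s = s(p)`. -/
def AcceptablePrime (Cs : ℕ → ℤ) (p : ℕ) (α : ℕ → ℕ) (s : ℕ) : Prop :=
  1 ≤ s ∧ (∀ k, 1 ≤ k → IsRank Cs (p ^ k) (α k)) ∧
  (∀ k, s < k → α k = p ^ (k - s) * α s)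

/-- The `p`-adic valuation of the `C`-multinomial coefficient,
defined as `ν_p(n!_C) - ∑_i ν_p(m_i!_C)` (an integer). -/
def nuCmulti (p : ℕ) (Cs : ℕ → ℤ) {k : ℕ} (n : ℕ) (m : Fin k → ℕ) : ℤ :=
  (padicValInt p (Corial Cs n) : ℤ) - ∑ i, (padicValInt p (Corial Cs (m i)) : ℤ)

/-- `T_{p,k,C}(n, x)`: the generating polynomial counting `C`-multinomial coefficients
with `k` parts and top index `n` by their `p`-adic valuations. -/
noncomputable def TmultiC (p k : ℕ) (Cs : ℕ → ℤ) (n : ℕ) : Polynomial ℤ :=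
  ∑ m ∈ Finset.Nat.antidiagonalTuple k n, Polynomial.X ^ (nuCmulti p Cs n m).toNat

/-- `T_{p,k}(n, x)`: the generating polynomial counting ordinary multinomial coefficients
with `k` parts and top index `n` by their `p`-adic valuations. -/
noncomputable def TmultiOrd (p k n : ℕ) : Polynomial ℤ :=
  ∑ m ∈ Finset.Nat.antidiagonalTuple k n,
    Polynomial.X ^ (padicValNat p (Nat.multinomial Finset.univ m))

/-- `T_{p,k,λ}(n, x)`: `0` if `n < λ`, and
`x^(ν_p(n!/(n-λ)!) + λ) · T_{p,k}(n - λ, x)` otherwise. -/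
noncomputable def TmultiLam (p k lam n : ℕ) : Polynomial ℤ :=
  if n < lam then 0
  else Polynomial.X ^ ((padicValNat p (Nat.factorial n)
      - padicValNat p (Nat.factorial (n - lam))) + lam) * TmultiOrd p k (n - lam)

/-- `f_{p,k,C,λ}(r, r⃗)` from the acceptable-prime initial vector. -/
def fCmulti (α : ℕ → ℕ) (s : ℕ) {k : ℕ} (lam r : ℕ) (rv : Fin k → ℕ) : ℤ :=
  (lam : ℤ) * ∑ j ∈ Finset.Icc 1 s, ((α s / α j : ℕ) : ℤ)
  + ∑ j ∈ Finset.Icc 1 s,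
      (((r / α j : ℕ) : ℤ) - ∑ i, ((rv i / α j : ℕ) : ℤ))

/-!
Legendre's formula counts the pairs `(j, t)` with `p ^ j ∣ t ≤ n`. In a strong divisibility sequence
`p ^ j ∣ C_t` holds exactly when `α(p ^ j) ∣ t`, so the same count gives
`ν_p(n!_C) = ∑_{j ≥ 1} ⌊n / α(p ^ j)⌋`. For an acceptable prime the terms with `j > s` are
`⌊⌊n / α(p ^ s)⌋ / p ^ (j - s)⌋` and, by the classical Legendre formula, sum to
`ν_p(⌊n / α(p ^ s)⌋!)`. Since `α(p ^ j) ∣ α(p ^ s)` for `j ≤ s`, the terms with `j ≤ s` are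
additive along the division `n = α(p ^ s) q + r`.
-/

theorem padicValInt_eq_card_pow_dvd {p : ℕ} [Fact p.Prime] {z : ℤ} (hz : z ≠ 0) {b : ℕ}
    (hb : ¬(p : ℤ) ^ b ∣ z) : padicValInt p z = #{j ∈ Ico 1 b | (p : ℤ) ^ j ∣ z} := by
  have pow_dvd_iff_le (j : ℕ) : (p : ℤ) ^ j ∣ z ↔ j ≤ padicValInt p z := by
    rw [padicValInt_dvd_iff, or_iff_right hz]
  have filter_eq : {j ∈ Ico 1 b | (p : ℤ) ^ j ∣ z} = Icc 1 (padicValInt p z) := by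
    rw [pow_dvd_iff_le] at hb
    ext j
    simp only [mem_filter, mem_Ico, mem_Icc, pow_dvd_iff_le]
    omega
  rw [filter_eq, Nat.card_Icc, Nat.add_sub_cancel]

section StrongDivisibility

variable {Cs : ℕ → ℤ} {p : ℕ} {α : ℕ → ℕ}

theorem IsStrongDivSeq.dvd_of_dvd (hC : IsStrongDivSeq Cs) {a t : ℕ} (ha : 1 ≤ a) (ht : 1 ≤ t)
    (hat : a ∣ t) : Cs a ∣ Cs t := by
  rw [← Int.gcd_eq_natAbs_left_iff_dvd, Int.gcd_comm, hC.2 a t ha ht, Nat.gcd_eq_right hat]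

theorem IsStrongDivSeq.dvd_gcd (hC : IsStrongDivSeq Cs) {a t : ℕ} (ha : 1 ≤ a) (ht : 1 ≤ t)
    {d : ℤ} (hda : d ∣ Cs a) (hdt : d ∣ Cs t) : d ∣ Cs (Nat.gcd t a) := by
  rw [← Int.dvd_natAbs, ← hC.2 a t ha ht]
  exact Int.dvd_coe_gcd hdt hda

theorem IsRank.dvd_iff (hC : IsStrongDivSeq Cs) {m a t : ℕ} (h : IsRank Cs m a) (ht : 1 ≤ t) :
    (m : ℤ) ∣ Cs t ↔ a ∣ t := by
  obtain ⟨ha, hma, hmin⟩ := h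
  refine ⟨fun hmt => ?_, fun hat => hma.trans (hC.dvd_of_dvd ha ht hat)⟩
  have a_le_gcd : a ≤ Nat.gcd t a :=
    hmin _ (Nat.gcd_pos_of_pos_left _ ht) (hC.dvd_gcd ha ht hma hmt)
  have gcd_eq : Nat.gcd t a = a := (Nat.gcd_le_right t ha).antisymm a_le_gcd
  exact Nat.gcd_eq_right_iff_dvd.mp gcd_eq

theorem IsRank.dvd_of_dvd (hC : IsStrongDivSeq Cs) {m m' a a' : ℕ} (h : IsRank Cs m a)
    (h' : IsRank Cs m' a') (hmm' : m ∣ m') : a ∣ a' :=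
  (h.dvd_iff hC h'.1).mp ((Int.natCast_dvd_natCast.mpr hmm').trans h'.2.1)

theorem IsStrongDivSeq.corial_ne_zero (hC : IsStrongDivSeq Cs) (n : ℕ) : Corial Cs n ≠ 0 := by
  induction n with
  | zero => exact one_ne_zero
  | succ n ih => exact mul_ne_zero ih (hC.1 _ n.succ_pos)

theorem IsStrongDivSeq.padicValInt_corial [Fact p.Prime] (hC : IsStrongDivSeq Cs) (n : ℕ) :
    padicValInt p (Corial Cs n) = ∑ t ∈ Ioc 0 n, padicValInt p (Cs t) := by
  induction n with
  | zero => simp [Corial]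
  | succ n ih =>
    rw [Corial, padicValInt.mul (hC.corial_ne_zero n) (hC.1 _ n.succ_pos), ih,
      sum_Ioc_succ_top n.zero_le]

theorem IsStrongDivSeq.padicValInt_eq_card_rank_dvd [Fact p.Prime] (hC : IsStrongDivSeq Cs)
    {b t : ℕ} (hα : ∀ j ∈ Icc 1 b, IsRank Cs (p ^ j) (α j)) (hb : 1 ≤ b) (ht : 1 ≤ t)
    (htb : t < α b) : padicValInt p (Cs t) = #{j ∈ Ico 1 b | α j ∣ t} := by
  have pow_dvd_iff {j : ℕ} (hj : j ∈ Icc 1 b) : (p : ℤ) ^ j ∣ Cs t ↔ α j ∣ t := by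
    exact_mod_cast (hα j hj).dvd_iff hC ht
  have not_pow_dvd : ¬(p : ℤ) ^ b ∣ Cs t := by
    rw [pow_dvd_iff (right_mem_Icc.mpr hb)]
    exact Nat.not_dvd_of_pos_of_lt ht htb
  rw [padicValInt_eq_card_pow_dvd (hC.1 t ht) not_pow_dvd]
  exact congrArg card (filter_congr fun j hj => pow_dvd_iff (Ico_subset_Icc_self hj))

theorem IsStrongDivSeq.padicValInt_corial_eq_sum_div [Fact p.Prime] (hC : IsStrongDivSeq Cs)
    {b n : ℕ} (hα : ∀ j ∈ Icc 1 b, IsRank Cs (p ^ j) (α j)) (hb : 1 ≤ b) (hn : n < α b) :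
    padicValInt p (Corial Cs n) = ∑ j ∈ Ico 1 b, n / α j := by
  calc
    padicValInt p (Corial Cs n) = ∑ t ∈ Ioc 0 n, #{j ∈ Ico 1 b | α j ∣ t} := by
      rw [hC.padicValInt_corial]
      refine sum_congr rfl fun t ht => ?_
      obtain ⟨t_pos, t_le⟩ := mem_Ioc.mp ht
      exact hC.padicValInt_eq_card_rank_dvd hα hb t_pos (t_le.trans_lt hn)
    _ = ∑ j ∈ Ico 1 b, #{t ∈ Ioc 0 n | α j ∣ t} :=
      (sum_card_bipartiteAbove_eq_sum_card_bipartiteBelow fun j t => α j ∣ t).symm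
    _ = ∑ j ∈ Ico 1 b, n / α j := by simp only [Nat.Ioc_filter_dvd_card_eq_div]

end StrongDivisibility

namespace AcceptablePrime

variable {Cs : ℕ → ℤ} {p : ℕ} {α : ℕ → ℕ} {s : ℕ}

theorem rank_pos (hacc : AcceptablePrime Cs p α s) {j : ℕ} (hj : 1 ≤ j) : 0 < α j :=
  (hacc.2.1 j hj).1

theorem rank_dvd_rank (hC : IsStrongDivSeq Cs) (hacc : AcceptablePrime Cs p α s) {i j : ℕ}
    (hi : 1 ≤ i) (hij : i ≤ j) : α i ∣ α j :=
  (hacc.2.1 i hi).dvd_of_dvd hC (hacc.2.1 j (hi.trans hij)) (pow_dvd_pow p hij)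

theorem rank_add (hacc : AcceptablePrime Cs p α s) (e : ℕ) : α (s + e) = α s * p ^ e := by
  rcases e.eq_zero_or_pos with rfl | he
  · rw [add_zero, pow_zero, mul_one]
  · rw [hacc.2.2 _ (Nat.lt_add_of_pos_right he), Nat.add_sub_cancel_left, mul_comm]

theorem padicValInt_corial [Fact p.Prime] (hC : IsStrongDivSeq Cs)
    (hacc : AcceptablePrime Cs p α s) (n : ℕ) :
    padicValInt p (Corial Cs n) =
      ∑ j ∈ Icc 1 s, n / α j + padicValNat p (n / α s).factorial := by
  have one_lt_p : 1 < p := (Fact.out : p.Prime).one_lt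
  set e := Nat.log p (n / α s) + 1
  have n_lt_rank : n < α (s + e) := by
    rw [hacc.rank_add, mul_comm, ← Nat.div_lt_iff_lt_mul (hacc.rank_pos hacc.1)]
    exact Nat.lt_pow_succ_log_self one_lt_p _
  have tail_eq : ∑ j ∈ Ico (s + 1) (s + e), n / α j = padicValNat p (n / α s).factorial := by
    rw [padicValNat_factorial (Nat.lt_succ_self (Nat.log p (n / α s))), add_comm s 1,
      add_comm s e, ← sum_Ico_add']
    refine sum_congr rfl fun i _ => ?_
    rw [add_comm i s, hacc.rank_add, Nat.div_div_eq_div_mul]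
  rw [hC.padicValInt_corial_eq_sum_div (fun j hj => hacc.2.1 j (mem_Icc.mp hj).1)
      (hacc.1.trans (s.le_add_right e)) n_lt_rank,
    ← sum_Ico_consecutive _ (Nat.le_add_left 1 s) (by omega : s + 1 ≤ s + e), tail_eq,
    Ico_add_one_right_eq_Icc]

theorem padicValInt_corial_mul_add [Fact p.Prime] (hC : IsStrongDivSeq Cs)
    (hacc : AcceptablePrime Cs p α s) (q : ℕ) {r : ℕ} (hr : r < α s) :
    padicValInt p (Corial Cs (α s * q + r)) =
      q * ∑ j ∈ Icc 1 s, α s / α j + ∑ j ∈ Icc 1 s, r / α j + padicValNat p q.factorial := by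
  have div_rank_s : (α s * q + r) / α s = q := by
    rw [Nat.mul_add_div (hacc.rank_pos hacc.1), Nat.div_eq_of_lt hr, add_zero]
  have div_rank {j : ℕ} (hj : j ∈ Icc 1 s) :
      (α s * q + r) / α j = q * (α s / α j) + r / α j := by
    obtain ⟨one_le_j, j_le_s⟩ := mem_Icc.mp hj
    have rank_dvd : α j ∣ α s := hacc.rank_dvd_rank hC one_le_j j_le_s
    rw [Nat.add_div_of_dvd_right (rank_dvd.mul_right q), mul_comm, Nat.mul_div_assoc q rank_dvd]
  rw [hacc.padicValInt_corial hC, div_rank_s, sum_congr rfl fun j => div_rank,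
    sum_add_distrib, mul_sum]

end AcceptablePrime

theorem stmt14_general (Cs : ℕ → ℤ) (p : ℕ) (hp : p.Prime) (α : ℕ → ℕ) (s : ℕ)
    (hC : IsStrongDivSeq Cs) (hacc : AcceptablePrime Cs p α s)
    (k n n' r lam : ℕ) (m m' rv : Fin k → ℕ)
    (hn : n = α s * n' + r) (hr : r < α s)
    (hm : ∀ i, m i = α s * m' i + rv i) (hri : ∀ i, rv i < α s)
    (hlam : (lam : ℤ) = (n' : ℤ) - ∑ i, (m' i : ℤ)) :
    nuCmulti p Cs n m =
      fCmulti α s lam r rv + (padicValNat p (Nat.factorial n') : ℤ)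
        - ∑ i, (padicValNat p (Nat.factorial (m' i)) : ℤ) := by
  have := Fact.mk hp
  simp only [nuCmulti, fCmulti, hn, hm, hacc.padicValInt_corial_mul_add hC _ hr,
    fun i => hacc.padicValInt_corial_mul_add hC (m' i) (hri i)]
  push_cast
  rw [hlam, sum_sub_distrib, sum_comm (s := Icc 1 s)]
  simp only [sum_add_distrib, ← sum_mul]
  ring

theorem stmt14 (Cs : ℕ → ℤ) (p : ℕ) (hp : p.Prime) (α : ℕ → ℕ) (s : ℕ)
    (hC : IsStrongDivSeq Cs) (hacc : AcceptablePrime Cs p α s)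
    (k : ℕ) (hk : 2 ≤ k) (n n' r lam : ℕ) (m m' rv : Fin k → ℕ)
    (hn : n = α s * n' + r) (hr : r < α s)
    (hm : ∀ i, m i = α s * m' i + rv i) (hri : ∀ i, rv i < α s)
    (hsum : ∑ i, m i = n)
    (hlam : (lam : ℤ) = (n' : ℤ) - ∑ i, (m' i : ℤ)) :
    nuCmulti p Cs n m =
      fCmulti α s lam r rv + (padicValNat p (Nat.factorial n') : ℤ)
        - ∑ i, (padicValNat p (Nat.factorial (m' i)) : ℤ) :=
  stmt14_general Cs p hp α s hC hacc k n n' r lam m m' rv hn hr hm hri hlam
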